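/- Let G be a group with finite generating set and word metric, admitting a homological connecting vector (k₀,…,k_m) of length m, and set k := max(k₀,…,k_m). Then for every nonzero character χ : G → ℝ the following are equivalent: (1) χ ∈ Σ^m(G;ℤ); (2) there exists a chain endomorphism of ℤG-complexes (φ_q)_{q=0,…,m} on (C_q^k(G))_{q=0,…,m} extending the identity on ℤ with v_χ(φ_q(c)) − v_χ(c) > 0 for every nonzero c ∈ C_q^k(G) and every q = 0,…,m. -/

import Mathlib

open Finsupp

variable {G : Type*} [Group G]

/-- Word length with respect to a generating set `X`. -/
noncomputable def wordLength (X : Finset G) (g : G) : ℕ :=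
  sInf {n : ℕ | ∃ w : List G, w.length = n ∧ (∀ x ∈ w, x ∈ X ∨ x⁻¹ ∈ X) ∧ w.prod = g}

/-- The left-invariant word metric `d(g,h) = l(g⁻¹h)`. -/
noncomputable def wordDist (X : Finset G) (g h : G) : ℕ :=
  wordLength X (g⁻¹ * h)

/-- `c` is a chain in `C_q^k(S)`: its support consists of `(q+1)`-tuples of elements of `S`
that are pairwise at distance at most `k`. -/
def VRChain (X : Finset G) (S : Set G) (q k : ℕ) (c : (Fin (q + 1) → G) →₀ ℤ) : Prop :=
  ∀ σ ∈ c.support, (∀ i, σ i ∈ S) ∧ ∀ i j, wordDist X (σ i) (σ j) ≤ k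

/-- The simplicial boundary map `∂_{q+1} : ℤ[G^{q+2}] → ℤ[G^{q+1}]`. -/
noncomputable def bnd (q : ℕ) :
    ((Fin (q + 2) → G) →₀ ℤ) →ₗ[ℤ] ((Fin (q + 1) → G) →₀ ℤ) :=
  Finsupp.lift _ ℤ _
    (fun σ => ∑ i : Fin (q + 2), ((-1 : ℤ) ^ (i : ℕ)) • Finsupp.single (σ ∘ i.succAbove) (1 : ℤ))

/-- The augmentation `ε : ℤ[G] → ℤ` sending every vertex to `1`. -/
noncomputable def aug : ((Fin 1 → G) →₀ ℤ) →ₗ[ℤ] ℤ :=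
  Finsupp.lift ℤ ℤ (Fin 1 → G) (fun _ => (1 : ℤ))

/-- Reduced `q`-cycles at scale `k` on `S` bound at scale `l` on `S`. -/
def BoundsAt (X : Finset G) (S : Set G) : ℕ → ℕ → ℕ → Prop
  | 0, k, l => ∀ z : (Fin 1 → G) →₀ ℤ, VRChain X S 0 k z → aug z = 0 →
      ∃ c : (Fin 2 → G) →₀ ℤ, VRChain X S 1 l c ∧ bnd 0 c = z
  | (q + 1), k, l => ∀ z : (Fin (q + 2) → G) →₀ ℤ, VRChain X S (q + 1) k z → bnd q z = 0 →
      ∃ c : (Fin (q + 3) → G) →₀ ℤ, VRChain X S (q + 2) l c ∧ bnd (q + 1) c = z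

/-- `S ⊆ G` is of type `FP_m`. -/
def TypeFP (X : Finset G) (S : Set G) (m : ℕ) : Prop :=
  ∀ q < m, ∀ k : ℕ, ∃ l ≥ k, BoundsAt X S q k l

/-- A character on `G` is a homomorphism to the additive reals. -/
def IsCharacter (χ : G → ℝ) : Prop :=
  ∀ g h : G, χ (g * h) = χ g + χ h

/-- Simultaneous left translation on chains, making `ℤ[G^{q+1}]` a `ℤG`-module. -/
noncomputable def lTranslate (g : G) (q : ℕ) :
    ((Fin (q + 1) → G) →₀ ℤ) →ₗ[ℤ] ((Fin (q + 1) → G) →₀ ℤ) :=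
  Finsupp.lmapDomain ℤ ℤ (fun σ i => g * σ i)

/-- A chain endomorphism of `ℤG`-complexes on `(C_q^k(G))_{q=0,…,m}` extending the identity
on `ℤ`: each `φ q` maps scale-`k` chains to scale-`k` chains, is `G`-equivariant,
satisfies `ε ∘ φ₀ = ε` and commutes with the boundary maps. -/
def IsChainEndo (X : Finset G) (k m : ℕ)
    (φ : ∀ q : ℕ, ((Fin (q + 1) → G) →₀ ℤ) →ₗ[ℤ] ((Fin (q + 1) → G) →₀ ℤ)) : Prop :=
  (∀ q ≤ m, ∀ c, VRChain X Set.univ q k c → VRChain X Set.univ q k (φ q c)) ∧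
  (∀ q ≤ m, ∀ (g : G) (c), VRChain X Set.univ q k c →
    φ q (lTranslate g q c) = lTranslate g q (φ q c)) ∧
  (∀ c : (Fin 1 → G) →₀ ℤ, VRChain X Set.univ 0 k c → aug (φ 0 c) = aug c) ∧
  (∀ q : ℕ, q + 1 ≤ m → ∀ c : (Fin (q + 2) → G) →₀ ℤ, VRChain X Set.univ (q + 1) k c →
    bnd q (φ (q + 1) c) = φ q (bnd q c))

/-- The valuation of a simplex: `v(σ) = min_i χ(g_i)` (with values in `EReal`). -/
noncomputable def vsimp (χ : G → ℝ) {q : ℕ} (σ : Fin (q + 1) → G) : EReal :=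
  ⨅ i, (χ (σ i) : EReal)

/-- The valuation of a chain: the minimum of the valuations of the simplices in its support
(`⊤` for the zero chain). -/
noncomputable def vchain (χ : G → ℝ) {q : ℕ} (c : (Fin (q + 1) → G) →₀ ℤ) : EReal :=
  ⨅ σ ∈ c.support, vsimp χ σ

/-!
Suppose `G_χ` is of type `FP_m`. Right multiplication by `t` raises the valuation by `χ t` and
commutes with left translation; filling its values on boundaries inside superlevel sets, which are
translates of `G_χ`, extends it to an equivariant chain map that still raises the valuation by
`χ t`, into some scale `l`. The connecting vector gives a chain map from scale `l` back to scale
`k`; by cocompactness it loses a bounded amount of valuation, which a large `χ t` outweighs.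

Conversely, let `φ` raise the valuation. By cocompactness it does so by at least a uniform `ε > 0`,
and the cone homotopy `H` from the identity to such a map loses no valuation. If a cycle `z` of
scale `k` in a superlevel set bounds `c` anywhere in `G`, then `z = ∂(H z) + φ z`, where `φ z`
bounds `φ c`, which lies higher than `c` by `ε`; finitely many iterations lift the filling into the
superlevel set, and the scale grows only by that of `H`. A cycle of larger scale is first moved to
scale `k` in the same way, by a chain map followed by enough iterates of `φ` to lose no valuation.
-/

section Simplicial

variable {V : Type*}

/-- Integral chains on `n`-tuples of vertices. Chains are graded by the number of vertices, so that
degree `q` sits at `n = q + 1` and `n = 0` is the copy of `ℤ` augmenting the complex. -/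
abbrev Chain (V : Type*) (n : ℕ) : Type _ := (Fin n → V) →₀ ℤ

/-- The boundary map of the augmented complex; `boundary 0` is the augmentation. -/
noncomputable def boundary (n : ℕ) : Chain V (n + 1) →ₗ[ℤ] Chain V n :=
  Finsupp.lift _ ℤ _
    (fun σ => ∑ i : Fin (n + 1), ((-1 : ℤ) ^ (i : ℕ)) • single (σ ∘ i.succAbove) (1 : ℤ))

/-- The cone operator with apex `a`, prepending the vertex `a` to every simplex. -/
noncomputable def cone (a : V) (n : ℕ) : Chain V n →ₗ[ℤ] Chain V (n + 1) :=
  Finsupp.lmapDomain ℤ ℤ (fun σ => Fin.cons a σ)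

lemma boundary_single (n : ℕ) (σ : Fin (n + 1) → V) :
    boundary n (single σ 1) =
      ∑ i : Fin (n + 1), ((-1 : ℤ) ^ (i : ℕ)) • single (σ ∘ i.succAbove) (1 : ℤ) := by
  simp [boundary]

lemma cone_single (a : V) (n : ℕ) (σ : Fin n → V) (b : ℤ) :
    cone a n (single σ b) = single (Fin.cons a σ) b := by
  simp [cone]

lemma boundary_zero_cone (a : V) (c : Chain V 0) : boundary 0 (cone a 0 c) = c := by
  suffices boundary 0 ∘ₗ cone a 0 = LinearMap.id from LinearMap.congr_fun this c
  ext σ : 2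
  simp [cone_single, boundary_single, Subsingleton.elim _ σ]

lemma boundary_cone (a : V) (n : ℕ) (c : Chain V (n + 1)) :
    boundary (n + 1) (cone a (n + 1) c) = c - cone a n (boundary n c) := by
  suffices boundary (n + 1) ∘ₗ cone a (n + 1) = LinearMap.id - cone a n ∘ₗ boundary n from
    LinearMap.congr_fun this c
  ext σ : 2
  have cons_comp_succAbove (i : Fin (n + 1)) :
      (Fin.cons a σ : Fin (n + 2) → V) ∘ i.succ.succAbove = Fin.cons a (σ ∘ i.succAbove) := by
    funext j
    cases j using Fin.cases <;> simp
  have cons_comp_succ : (Fin.cons a σ : Fin (n + 2) → V) ∘ Fin.succ = σ := Fin.cons_comp_succ a σ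
  simp [cone_single, boundary_single, Fin.sum_univ_succ (n := n + 1), cons_comp_succAbove,
    cons_comp_succ, pow_succ, sub_eq_add_neg]

lemma boundary_boundary (n : ℕ) (c : Chain V (n + 2)) : boundary n (boundary (n + 1) c) = 0 := by
  suffices boundary n ∘ₗ boundary (n + 1) = (0 : Chain V (n + 2) →ₗ[ℤ] Chain V n) from
    LinearMap.congr_fun this c
  have single_eq_cone {n : ℕ} (σ : Fin (n + 1) → V) :
      single σ (1 : ℤ) = cone (σ 0) n (single (Fin.tail σ) 1) := by
    rw [cone_single, Fin.cons_self_tail]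
  clear c
  induction n with
  | zero =>
    ext σ : 2
    simp [single_eq_cone σ, boundary_cone, boundary_zero_cone]
  | succ n ih =>
    ext σ : 2
    have ih_tail : boundary n (boundary (n + 1) (single (Fin.tail σ) 1)) = 0 :=
      LinearMap.congr_fun ih _
    rw [LinearMap.comp_apply, LinearMap.comp_apply, lsingle_apply, single_eq_cone, boundary_cone,
      map_sub, boundary_cone, ih_tail, map_zero, sub_zero, sub_self, LinearMap.zero_comp,
      LinearMap.zero_apply]

lemma boundary_zero_apply (c : Chain V 1) (σ : Fin 0 → V) : boundary 0 c σ = aug c := by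
  suffices Finsupp.lapply σ ∘ₗ boundary 0 = aug from LinearMap.congr_fun this c
  ext τ : 2
  simp [boundary_single, aug, Subsingleton.elim _ σ]

lemma boundary_zero_eq_iff (c d : Chain V 1) : boundary 0 c = boundary 0 d ↔ aug c = aug d := by
  simp only [Finsupp.ext_iff, boundary_zero_apply, forall_const]

end Simplicial

section Supports

variable {V : Type*}

lemma map_mem_of_mem_supported {R ι M : Type*} [Semiring R] [AddCommMonoid M] [Module R M]
    {F : (ι →₀ R) →ₗ[R] M} {A : Set ι} {N : Submodule R M} (h : ∀ i ∈ A, F (single i 1) ∈ N)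
    {c : ι →₀ R} (hc : c ∈ Finsupp.supported R R A) : F c ∈ N := by
  rw [Finsupp.supported_eq_span_single] at hc
  exact Submodule.map_span_le F _ N |>.2 (Set.forall_mem_image.2 h) (Submodule.mem_map_of_mem hc)

lemma map_eq_of_mem_supported {R ι M : Type*} [Semiring R] [AddCommMonoid M] [Module R M]
    {F F' : (ι →₀ R) →ₗ[R] M} {A : Set ι} (h : ∀ i ∈ A, F (single i 1) = F' (single i 1))
    {c : ι →₀ R} (hc : c ∈ Finsupp.supported R R A) : F c = F' c := by
  rw [Finsupp.supported_eq_span_single] at hc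
  exact LinearMap.eqOn_span (Set.forall_mem_image.2 h) hc

/-- The chains all of whose vertices lie in `S`. -/
noncomputable def chainsOn (S : Set V) (n : ℕ) : Submodule ℤ (Chain V n) :=
  Finsupp.supported ℤ ℤ {σ | ∀ i, σ i ∈ S}

/-- The superlevel set of `χ` of level `r`; for a character and `r = 0` it is the
half-space `G_χ`. -/
def superlevel (χ : V → ℝ) (r : ℝ) : Set V := {g | r ≤ χ g}

lemma single_mem_chainsOn {S : Set V} {n : ℕ} {σ : Fin n → V} (h : ∀ i, σ i ∈ S) :
    single σ 1 ∈ chainsOn S n :=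
  Finsupp.single_mem_supported _ _ h

lemma chainsOn_superlevel_anti (χ : V → ℝ) {r s : ℝ} (h : r ≤ s) (n : ℕ) :
    chainsOn (superlevel χ s) n ≤ chainsOn (superlevel χ r) n :=
  Finsupp.supported_mono fun _ hσ i => h.trans (hσ i)

lemma mem_chainsOn_zero (S : Set V) (c : Chain V 0) : c ∈ chainsOn S 0 :=
  fun _ _ i => i.elim0

lemma boundary_mem_chainsOn {S : Set V} {n : ℕ} {c : Chain V (n + 1)}
    (hc : c ∈ chainsOn S (n + 1)) : boundary n c ∈ chainsOn S n := by
  refine map_mem_of_mem_supported (fun σ hσ => ?_) hc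
  rw [boundary_single]
  exact sum_mem fun i _ => zsmul_mem (single_mem_chainsOn fun _ => hσ _) _

lemma cone_mem_chainsOn {S : Set V} {a : V} (ha : a ∈ S) {n : ℕ} {c : Chain V n}
    (hc : c ∈ chainsOn S n) : cone a n c ∈ chainsOn S (n + 1) := by
  refine map_mem_of_mem_supported (fun σ hσ => ?_) hc
  rw [cone_single]
  exact single_mem_chainsOn (Fin.cases ha hσ)

end Supports

section Valuation

variable {V : Type*}

lemma le_vchain_iff {χ : V → ℝ} {r : ℝ} {q : ℕ} {c : Chain V (q + 1)} :
    (r : EReal) ≤ vchain χ c ↔ c ∈ chainsOn (superlevel χ r) (q + 1) := by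
  simp only [vchain, vsimp, le_iInf_iff, EReal.coe_le_coe_iff]
  rfl

lemma exists_vchain_eq {χ : V → ℝ} {q : ℕ} {c : Chain V (q + 1)} (hc : c ≠ 0) :
    ∃ r : ℝ, vchain χ c = r := by
  have := (Finsupp.support_nonempty_iff.2 hc).to_subtype
  obtain ⟨⟨σ, _⟩, hσ⟩ := exists_eq_ciInf_of_finite (f := fun σ : c.support => vsimp χ σ.1)
  obtain ⟨i, hi⟩ := exists_eq_ciInf_of_finite (f := fun i => (χ (σ i) : EReal))
  exact ⟨χ (σ i), by rw [vchain, iInf_subtype', ← hσ, vsimp, hi]⟩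

lemma exists_mem_chainsOn_superlevel (χ : V → ℝ) {q : ℕ} (c : Chain V (q + 1)) :
    ∃ r, c ∈ chainsOn (superlevel χ r) (q + 1) := by
  rcases eq_or_ne c 0 with rfl | hc
  · exact ⟨0, zero_mem _⟩
  · obtain ⟨r, hr⟩ := exists_vchain_eq (χ := χ) hc
    exact ⟨r, le_vchain_iff.1 hr.ge⟩

end Valuation

section Translation

/-- Simultaneous left translation of chains by `g`. -/
noncomputable def leftTranslate (g : G) (n : ℕ) : Chain G n →ₗ[ℤ] Chain G n :=
  Finsupp.lmapDomain ℤ ℤ (g • ·)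

lemma leftTranslate_single (g : G) (n : ℕ) (σ : Fin n → G) (b : ℤ) :
    leftTranslate g n (single σ b) = single (g • σ) b := by
  simp [leftTranslate]

lemma leftTranslate_leftTranslate (g h : G) (n : ℕ) (c : Chain G n) :
    leftTranslate g n (leftTranslate h n c) = leftTranslate (g * h) n c := by
  suffices leftTranslate g n ∘ₗ leftTranslate h n = leftTranslate (g * h) n from
    LinearMap.congr_fun this c
  ext σ : 2
  simp [leftTranslate_single, mul_smul]

lemma leftTranslate_one (n : ℕ) (c : Chain G n) : leftTranslate 1 n c = c := by
  suffices leftTranslate (1 : G) n = LinearMap.id from LinearMap.congr_fun this c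
  ext σ : 2
  simp [leftTranslate_single]

lemma boundary_leftTranslate (g : G) (n : ℕ) (c : Chain G (n + 1)) :
    boundary n (leftTranslate g (n + 1) c) = leftTranslate g n (boundary n c) := by
  suffices boundary n ∘ₗ leftTranslate g (n + 1) = leftTranslate g n ∘ₗ boundary n from
    LinearMap.congr_fun this c
  ext σ : 2
  simp only [LinearMap.comp_apply, lsingle_apply, leftTranslate_single, boundary_single, map_sum,
    map_smul]
  rfl

lemma cone_leftTranslate (g a : G) (n : ℕ) (c : Chain G n) :
    cone (g * a) n (leftTranslate g n c) = leftTranslate g (n + 1) (cone a n c) := by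
  suffices cone (g * a) n ∘ₗ leftTranslate g n = leftTranslate g (n + 1) ∘ₗ cone a n from
    LinearMap.congr_fun this c
  ext σ : 2
  have cons_smul : (Fin.cons (g * a) (g • σ) : Fin (n + 1) → G) = g • (Fin.cons a σ) := by
    funext j
    cases j using Fin.cases <;> simp
  simp only [LinearMap.comp_apply, lsingle_apply, leftTranslate_single, cone_single, cons_smul]

end Translation

section Rips

variable {X : Finset G} {k l n : ℕ}

lemma wordDist_mul_left (X : Finset G) (a g h : G) :
    wordDist X (a * g) (a * h) = wordDist X g h := by
  simp [wordDist, mul_assoc]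

lemma wordDist_self (X : Finset G) (g : G) : wordDist X g g = 0 := by
  simp only [wordDist, inv_mul_cancel, wordLength]
  exact Nat.sInf_eq_zero.2 (Or.inl ⟨[], by simp⟩)

/-- The simplices of diameter at most `k`, given by their `n`-tuples of vertices. -/
def simplices (X : Finset G) (k n : ℕ) : Set (Fin n → G) :=
  {σ | ∀ i j, wordDist X (σ i) (σ j) ≤ k}

/-- The chains on simplices of diameter at most `k`. -/
noncomputable def chainsAt (X : Finset G) (k n : ℕ) : Submodule ℤ (Chain G n) :=
  Finsupp.supported ℤ ℤ (simplices X k n)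

lemma smul_mem_simplices {σ : Fin n → G} (hσ : σ ∈ simplices X k n) (g : G) :
    g • σ ∈ simplices X k n :=
  fun i j => (wordDist_mul_left X g (σ i) (σ j)).trans_le (hσ i j)

lemma const_mem_simplices (X : Finset G) (k n : ℕ) (g : G) :
    (fun _ => g) ∈ simplices X k n :=
  fun _ _ => (wordDist_self X g).trans_le k.zero_le

lemma single_mem_chainsAt {σ : Fin n → G} (hσ : σ ∈ simplices X k n) :
    single σ 1 ∈ chainsAt X k n :=
  Finsupp.single_mem_supported _ _ hσ

lemma chainsAt_mono (X : Finset G) (h : k ≤ l) (n : ℕ) : chainsAt X k n ≤ chainsAt X l n :=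
  Finsupp.supported_mono fun _ hσ i j => (hσ i j).trans h

lemma boundary_mem_chainsAt {c : Chain G (n + 1)} (hc : c ∈ chainsAt X k (n + 1)) :
    boundary n c ∈ chainsAt X k n := by
  refine map_mem_of_mem_supported (fun σ hσ => ?_) hc
  rw [boundary_single]
  exact sum_mem fun i _ => zsmul_mem (single_mem_chainsAt fun _ _ => hσ _ _) _

lemma leftTranslate_mem_chainsAt {c : Chain G n} (hc : c ∈ chainsAt X k n) (g : G) :
    leftTranslate g n c ∈ chainsAt X k n := by
  refine map_mem_of_mem_supported (fun σ hσ => ?_) hc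
  rw [leftTranslate_single]
  exact single_mem_chainsAt (smul_mem_simplices hσ g)

lemma vrChain_iff {S : Set G} {q : ℕ} {c : Chain G (q + 1)} :
    VRChain X S q k c ↔ c ∈ chainsAt X k (q + 1) ∧ c ∈ chainsOn S (q + 1) :=
  ⟨fun h => ⟨fun σ hσ => (h σ hσ).2, fun σ hσ => (h σ hσ).1⟩,
    fun h _ hσ => ⟨h.2 hσ, h.1 hσ⟩⟩

lemma vrChain_univ_iff {q : ℕ} {c : Chain G (q + 1)} :
    VRChain X Set.univ q k c ↔ c ∈ chainsAt X k (q + 1) :=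
  vrChain_iff.trans (and_iff_left fun _ _ _ => Set.mem_univ _)

lemma boundsAt_iff {S : Set G} {q : ℕ} :
    BoundsAt X S q k l ↔
      ∀ z ∈ chainsAt X k (q + 1), z ∈ chainsOn S (q + 1) → boundary q z = 0 →
        ∃ c ∈ chainsAt X l (q + 2), c ∈ chainsOn S (q + 2) ∧ boundary (q + 1) c = z := by
  rcases q with _ | q
  all_goals simp only [BoundsAt, vrChain_iff, and_assoc, and_imp]
  · have boundary_zero_eq_zero_iff (z : Chain G 1) : boundary 0 z = 0 ↔ aug z = 0 := by
      simpa using boundary_zero_eq_iff z 0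
    simp only [boundary_zero_eq_zero_iff]
    rfl
  · rfl

end Rips

section Character

variable {χ : G → ℝ}

lemma IsCharacter.map_one (hχ : IsCharacter χ) : χ 1 = 0 := by
  simpa using hχ 1 1

lemma IsCharacter.map_inv (hχ : IsCharacter χ) (g : G) : χ g⁻¹ = -χ g :=
  eq_neg_of_add_eq_zero_left (by rw [← hχ, inv_mul_cancel, hχ.map_one])

lemma IsCharacter.map_pow (hχ : IsCharacter χ) (g : G) (n : ℕ) : χ (g ^ n) = n • χ g := by
  induction n with
  | zero => simp [hχ.map_one]
  | succ n ih => rw [pow_succ, hχ, ih, succ_nsmul]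

lemma IsCharacter.exists_le (hχ : IsCharacter χ) (hne : ∃ g, χ g ≠ 0) (r : ℝ) :
    ∃ t, r ≤ χ t := by
  obtain ⟨a, ha⟩ : ∃ a, 0 < χ a := by
    obtain ⟨g, hg⟩ := hne
    rcases hg.lt_or_gt with hg | hg
    · exact ⟨g⁻¹, by rwa [hχ.map_inv, neg_pos]⟩
    · exact ⟨g, hg⟩
  obtain ⟨n, hn⟩ := Archimedean.arch r ha
  exact ⟨a ^ n, by rwa [hχ.map_pow]⟩

lemma IsCharacter.leftTranslate_mem_chainsOn (hχ : IsCharacter χ) {r : ℝ} {n : ℕ}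
    {c : Chain G n} (hc : c ∈ chainsOn (superlevel χ r) n) (g : G) :
    leftTranslate g n c ∈ chainsOn (superlevel χ (χ g + r)) n := by
  refine map_mem_of_mem_supported (fun σ hσ => ?_) hc
  rw [leftTranslate_single]
  refine single_mem_chainsOn fun i => ?_
  change χ g + r ≤ χ (g * σ i)
  rw [hχ]
  exact (add_le_add_iff_left _).2 (hσ i)

lemma IsCharacter.boundsAt_superlevel (hχ : IsCharacter χ) {X : Finset G} {q k l : ℕ}
    (h : BoundsAt X (superlevel χ 0) q k l) (s : G) : BoundsAt X (superlevel χ (χ s)) q k l := by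
  rw [boundsAt_iff] at h ⊢
  intro z hzk hzs hz
  obtain ⟨c, hcl, hc0, hc⟩ := h (leftTranslate s⁻¹ _ z) (leftTranslate_mem_chainsAt hzk _)
    (by simpa [hχ.map_inv] using hχ.leftTranslate_mem_chainsOn hzs s⁻¹)
    (by rw [boundary_leftTranslate, hz, map_zero])
  refine ⟨leftTranslate s _ c, leftTranslate_mem_chainsAt hcl _,
    by simpa using hχ.leftTranslate_mem_chainsOn hc0 s, ?_⟩
  rw [boundary_leftTranslate, hc, leftTranslate_leftTranslate, mul_inv_cancel, leftTranslate_one]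

end Character

section Cocompactness

variable {X : Finset G}

lemma finite_setOf_wordLength_le (hX : Subgroup.closure (X : Set G) = ⊤) (k : ℕ) :
    {g | wordLength X g ≤ k}.Finite := by
  let A : Set G := X ∪ (X : Set G)⁻¹
  have : Finite A := (X.finite_toSet.union X.finite_toSet.inv).to_subtype
  refine ((List.finite_length_le A k).image fun w => (w.map Subtype.val).prod).subset ?_
  intro g hg
  have hgen : g ∈ Submonoid.closure A := by
    rw [← Subgroup.closure_toSubmonoid, hX]
    trivial
  obtain ⟨w₀, hw₀, hprod₀⟩ := Submonoid.exists_list_of_mem_closure hgen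
  obtain ⟨w, hlen, hw, hprod⟩ :=
    Nat.sInf_mem (s := {n | ∃ w : List G, w.length = n ∧ (∀ x ∈ w, x ∈ X ∨ x⁻¹ ∈ X) ∧ w.prod = g})
      ⟨_, w₀, rfl, hw₀, hprod₀⟩
  exact ⟨w.attach.map fun x => ⟨x.1, hw x.1 x.2⟩, by simpa [hlen, wordLength] using hg,
    by simp [hprod]⟩

lemma exists_finset_orbit_representatives (hX : Subgroup.closure (X : Set G) = ⊤) (k n : ℕ) :
    ∃ T : Finset (Fin (n + 1) → G), (∀ τ ∈ T, τ ∈ simplices X k (n + 1)) ∧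
      ∀ σ ∈ simplices X k (n + 1), ∃ g : G, ∃ τ ∈ T, g • τ = σ := by
  have hfin : {τ ∈ simplices X k (n + 1) | ∀ i, wordLength X (τ i) ≤ k}.Finite :=
    (Set.Finite.pi' fun _ => finite_setOf_wordLength_le hX k).subset fun τ hτ => hτ.2
  refine ⟨hfin.toFinset, fun τ hτ => (hfin.mem_toFinset.1 hτ).1, fun σ hσ => ?_⟩
  exact ⟨σ 0, (σ 0)⁻¹ • σ,
    hfin.mem_toFinset.2 ⟨smul_mem_simplices hσ _, fun i => hσ 0 i⟩, smul_inv_smul _ _⟩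

end Cocompactness

section EquivariantMaps

variable {X : Finset G} {χ : G → ℝ} {k n p q : ℕ} {δ ε : ℝ}

/-- `F` commutes with left translations on the chains of scale `k`. -/
def EquivariantAt (X : Finset G) (k : ℕ) (F : Chain G n →ₗ[ℤ] Chain G q) : Prop :=
  ∀ g, ∀ c ∈ chainsAt X k n, F (leftTranslate g n c) = leftTranslate g q (F c)

/-- `F` raises the valuation of chains of scale `k` by at least `δ`. A negative `δ` is allowed, and
bounds a loss of valuation. -/
def RaisesBy (X : Finset G) (χ : G → ℝ) (k : ℕ) (δ : ℝ) (F : Chain G n →ₗ[ℤ] Chain G q) : Prop :=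
  ∀ r, ∀ c ∈ chainsAt X k n, c ∈ chainsOn (superlevel χ r) n →
    F c ∈ chainsOn (superlevel χ (r + δ)) q

lemma RaisesBy.mono {F : Chain G n →ₗ[ℤ] Chain G q} (hF : RaisesBy X χ k δ F) (h : ε ≤ δ) :
    RaisesBy X χ k ε F :=
  fun r c hck hcr => chainsOn_superlevel_anti χ (by gcongr) q (hF r c hck hcr)

lemma RaisesBy.comp {l : ℕ} {F : Chain G p →ₗ[ℤ] Chain G q} {F' : Chain G n →ₗ[ℤ] Chain G p}
    (hF : RaisesBy X χ l δ F) (hF' : RaisesBy X χ k ε F')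
    (hmap : ∀ c ∈ chainsAt X k n, F' c ∈ chainsAt X l p) : RaisesBy X χ k (ε + δ) (F ∘ₗ F') :=
  fun r c hck hcr => by simpa [add_assoc] using hF _ _ (hmap c hck) (hF' r c hck hcr)

lemma raisesBy_of_forall_single {F : Chain G n →ₗ[ℤ] Chain G q}
    (h : ∀ σ ∈ simplices X k n, ∀ r, (∀ i, r ≤ χ (σ i)) →
      F (single σ 1) ∈ chainsOn (superlevel χ (r + δ)) q) : RaisesBy X χ k δ F := by
  intro r c hck hcr
  refine map_mem_of_mem_supported (A := simplices X k n ∩ {σ | ∀ i, σ i ∈ superlevel χ r})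
    (fun σ hσ => h σ hσ.1 r hσ.2) ?_
  rw [Finsupp.supported_inter]
  exact ⟨hck, hcr⟩

lemma exists_mem_chainsAt (X : Finset G) (c : Chain G n) : ∃ k, c ∈ chainsAt X k n := by
  let d : (Fin n → G) × Fin n × Fin n → ℕ := fun x => wordDist X (x.1 x.2.1) (x.1 x.2.2)
  refine ⟨(c.support ×ˢ Finset.univ).sup d, fun σ hσ i j => ?_⟩
  exact Finset.le_sup (f := d) (b := (σ, i, j)) (Finset.mk_mem_product hσ (Finset.mem_univ _))

lemma EquivariantAt.exists_mapsTo_chainsAt {F : Chain G (n + 1) →ₗ[ℤ] Chain G q}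
    (hF : EquivariantAt X k F) (hX : Subgroup.closure (X : Set G) = ⊤) :
    ∃ l, ∀ c ∈ chainsAt X k (n + 1), F c ∈ chainsAt X l q := by
  obtain ⟨T, hT, horbit⟩ := exists_finset_orbit_representatives hX k n
  choose l hl using fun τ : Fin (n + 1) → G => exists_mem_chainsAt X (F (single τ 1))
  refine ⟨T.sup l, fun c hc => map_mem_of_mem_supported (fun σ hσ => ?_) hc⟩
  obtain ⟨g, τ, hτ, rfl⟩ := horbit σ hσ
  rw [← leftTranslate_single, hF g _ (single_mem_chainsAt (hT τ hτ))]
  exact leftTranslate_mem_chainsAt (chainsAt_mono X (Finset.le_sup hτ) q (hl τ)) g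

lemma EquivariantAt.exists_raisesBy {F : Chain G (n + 1) →ₗ[ℤ] Chain G q}
    (hF : EquivariantAt X k F) (hX : Subgroup.closure (X : Set G) = ⊤) (hχ : IsCharacter χ)
    {P : ℝ → Prop} (h : ∀ σ ∈ simplices X k (n + 1), ∃ δ, P δ ∧
      ∃ i, F (single σ 1) ∈ chainsOn (superlevel χ (χ (σ i) + δ)) q) :
    ∃ δ, P δ ∧ RaisesBy X χ k δ F := by
  obtain ⟨T, hT, horbit⟩ := exists_finset_orbit_representatives hX k n
  choose! δ hP i hi using h
  have hTne : T.Nonempty :=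
    let ⟨_, τ, hτ, _⟩ := horbit _ (const_mem_simplices X k (n + 1) 1)
    ⟨τ, hτ⟩
  obtain ⟨τ₀, hτ₀, hmin⟩ := T.exists_min_image δ hTne
  refine ⟨δ τ₀, hP τ₀ (hT τ₀ hτ₀), raisesBy_of_forall_single fun σ hσ r hr => ?_⟩
  obtain ⟨g, τ, hτ, rfl⟩ := horbit σ hσ
  rw [← leftTranslate_single, hF g _ (single_mem_chainsAt (hT τ hτ))]
  refine chainsOn_superlevel_anti χ ?_ q (hχ.leftTranslate_mem_chainsOn (hi τ (hT τ hτ)) g)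
  have hrτ : r ≤ χ g + χ (τ (i τ)) := by simpa [hχ g] using hr (i τ)
  linarith [hmin τ hτ]

lemma exists_equivariantAt {P : (Fin (n + 1) → G) → Chain G q → Prop}
    (hP : ∀ g σ y, P σ y → P (g • σ) (leftTranslate g q y))
    (h : ∀ σ ∈ simplices X k (n + 1), ∃ y, P σ y) :
    ∃ F : Chain G (n + 1) →ₗ[ℤ] Chain G q,
      EquivariantAt X k F ∧ ∀ σ ∈ simplices X k (n + 1), P σ (F (single σ 1)) := by
  choose! y hy using h
  let F : Chain G (n + 1) →ₗ[ℤ] Chain G q :=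
    Finsupp.lift _ ℤ _ fun σ => leftTranslate (σ 0) q (y ((σ 0)⁻¹ • σ))
  have F_single (σ : Fin (n + 1) → G) :
      F (single σ 1) = leftTranslate (σ 0) q (y ((σ 0)⁻¹ • σ)) := by simp [F]
  refine ⟨F, fun g c hc => ?_, fun σ hσ => ?_⟩
  · refine map_eq_of_mem_supported (F := F ∘ₗ leftTranslate g _) (F' := leftTranslate g q ∘ₗ F)
      (fun σ _ => ?_) hc
    simp [leftTranslate_single, F_single, leftTranslate_leftTranslate, smul_smul]
  · simpa [F_single] using hP (σ 0) _ _ (hy _ (smul_mem_simplices hσ (σ 0)⁻¹))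

end EquivariantMaps

section AugmentedChainMaps

variable {X : Finset G} {χ : G → ℝ} {k l m : ℕ} {φ ψ : ∀ n, Chain G n →ₗ[ℤ] Chain G n}

/-- `φ` is, up to degree `m`, a chain map of `ℤG`-complexes from the complex of scale `k` to the one
of scale `l` extending the identity on `ℤ`, which is the degree with no vertices. -/
structure IsAugChainMap (X : Finset G) (k l m : ℕ) (φ : ∀ n, Chain G n →ₗ[ℤ] Chain G n) :
    Prop where
  degree_zero : φ 0 = LinearMap.id
  mapsTo : ∀ n ≤ m + 1, ∀ c ∈ chainsAt X k n, φ n c ∈ chainsAt X l n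
  equivariantAt : ∀ n ≤ m + 1, EquivariantAt X k (φ n)
  boundary_comm : ∀ n ≤ m, ∀ c ∈ chainsAt X k (n + 1),
    boundary n (φ (n + 1) c) = φ n (boundary n c)

/-- A family of maps in degrees `q ≥ 0`, extended by the identity of the augmentation. -/
noncomputable def augment (φ : ∀ q, Chain G (q + 1) →ₗ[ℤ] Chain G (q + 1)) :
    ∀ n, Chain G n →ₗ[ℤ] Chain G n
  | 0 => LinearMap.id
  | q + 1 => φ q

lemma IsChainEndo.isAugChainMap_augment {φ : ∀ q, Chain G (q + 1) →ₗ[ℤ] Chain G (q + 1)}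
    (hφ : IsChainEndo X k m φ) : IsAugChainMap X k k m (augment φ) := by
  simp only [IsChainEndo, vrChain_univ_iff, ← boundary_zero_eq_iff] at hφ
  obtain ⟨hmap, hequiv, haug, hcomm⟩ := hφ
  refine ⟨rfl, fun n hn c hc => ?_, fun n hn g c hc => ?_, fun n hn c hc => ?_⟩
  · cases n with
    | zero => exact hc
    | succ q => exact hmap q (by lia) c hc
  · cases n with
    | zero => rfl
    | succ q => exact hequiv q (by lia) g c hc
  · cases n with
    | zero => exact haug c hc
    | succ q => exact hcomm q hn c hc

lemma IsAugChainMap.isChainEndo (hφ : IsAugChainMap X k k m φ) :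
    IsChainEndo X k m fun q => φ (q + 1) := by
  simp only [IsChainEndo, vrChain_univ_iff, ← boundary_zero_eq_iff]
  refine ⟨fun q hq => hφ.mapsTo _ (by lia), fun q hq => hφ.equivariantAt _ (by lia),
    fun c hc => ?_, fun q hq => hφ.boundary_comm _ hq⟩
  rw [hφ.boundary_comm 0 m.zero_le c hc, hφ.degree_zero, LinearMap.id_apply]

lemma IsAugChainMap.comp {k' : ℕ} (hφ : IsAugChainMap X l k' m φ)
    (hψ : IsAugChainMap X k l m ψ) : IsAugChainMap X k k' m fun n => φ n ∘ₗ ψ n where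
  degree_zero := by rw [hφ.degree_zero, hψ.degree_zero, LinearMap.id_comp]
  mapsTo n hn c hc := hφ.mapsTo n hn _ (hψ.mapsTo n hn c hc)
  equivariantAt n hn g c hc := by
    simp only [LinearMap.comp_apply]
    rw [hψ.equivariantAt n hn g c hc, hφ.equivariantAt n hn g _ (hψ.mapsTo n hn c hc)]
  boundary_comm n hn c hc := by
    simp only [LinearMap.comp_apply]
    rw [hφ.boundary_comm n hn _ (hψ.mapsTo _ (by lia) c hc), hψ.boundary_comm n hn c hc]

lemma forall_le_succ_update {β : ℕ → Type*} {P : ∀ n, β n → Prop} {f : ∀ n, β n} {N : ℕ}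
    {b : β (N + 1)} (hf : ∀ n ≤ N, P n (f n)) (hb : P (N + 1) b) :
    ∀ n ≤ N + 1, P n (Function.update f (N + 1) b n) := by
  intro n hn
  rcases hn.lt_or_eq with hn | rfl
  · rw [Function.update_of_ne hn.ne]
    exact hf n (by lia)
  · rwa [Function.update_self]

lemma IsAugChainMap.update (hφ : IsAugChainMap X k l m φ)
    {F : Chain G (m + 2) →ₗ[ℤ] Chain G (m + 2)}
    (hmap : ∀ c ∈ chainsAt X k (m + 2), F c ∈ chainsAt X l (m + 2)) (hequiv : EquivariantAt X k F)
    (hcomm : ∀ c ∈ chainsAt X k (m + 2), boundary (m + 1) (F c) = φ (m + 1) (boundary (m + 1) c)) :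
    IsAugChainMap X k l (m + 1) (Function.update φ (m + 2) F) where
  degree_zero := by rw [Function.update_of_ne (by lia), hφ.degree_zero]
  mapsTo := forall_le_succ_update (P := fun n (F : Chain G n →ₗ[ℤ] Chain G n) =>
    ∀ c ∈ chainsAt X k n, F c ∈ chainsAt X l n) hφ.mapsTo hmap
  equivariantAt := forall_le_succ_update (P := fun _ F => EquivariantAt X k F) hφ.equivariantAt
    hequiv
  boundary_comm n hn c hc := by
    rw [Function.update_of_ne (by lia : n ≠ m + 2)]
    rcases hn.lt_or_eq with hn | rfl
    · rw [Function.update_of_ne (by lia), hφ.boundary_comm n (by lia) c hc]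
    · rw [Function.update_self, hcomm c hc]

lemma IsAugChainMap.exists_raisesBy (hφ : IsAugChainMap X k l m φ)
    (hX : Subgroup.closure (X : Set G) = ⊤) (hχ : IsCharacter χ) {P : ℝ → Prop}
    (h : ∀ q ≤ m, ∀ σ ∈ simplices X k (q + 1), ∃ δ, P δ ∧
      ∃ i, φ (q + 1) (single σ 1) ∈ chainsOn (superlevel χ (χ (σ i) + δ)) (q + 1)) :
    ∃ δ, P δ ∧ ∀ n ≤ m + 1, RaisesBy X χ k δ (φ n) := by
  choose! δ hP hδ using fun q (hq : q ≤ m) =>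
    (hφ.equivariantAt (q + 1) (by lia)).exists_raisesBy hX hχ (h q hq)
  obtain ⟨q₀, hq₀, hmin⟩ := (Finset.range (m + 1)).exists_min_image δ ⟨0, by simp⟩
  refine ⟨δ q₀, hP q₀ (Finset.mem_range_succ_iff.1 hq₀), fun n hn => ?_⟩
  cases n with
  | zero => exact fun _ _ _ _ => mem_chainsOn_zero _ _
  | succ q => exact (hδ q (by lia)).mono (hmin q (by simpa using hn))

lemma IsAugChainMap.exists_bounded_loss (hφ : IsAugChainMap X k l m φ)
    (hX : Subgroup.closure (X : Set G) = ⊤) (hχ : IsCharacter χ) :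
    ∃ δ, ∀ n ≤ m + 1, RaisesBy X χ k δ (φ n) := by
  obtain ⟨δ, -, hδ⟩ := hφ.exists_raisesBy hX hχ (P := fun _ => True) fun q _ σ _ => by
    obtain ⟨r, hr⟩ := exists_mem_chainsOn_superlevel χ (φ (q + 1) (single σ 1))
    exact ⟨r - χ (σ 0), trivial, 0, by simpa using hr⟩
  exact ⟨δ, hδ⟩

end AugmentedChainMaps

section ConeHomotopy

variable {X : Finset G} {χ : G → ℝ} {k l m : ℕ} {φ : ∀ n, Chain G n →ₗ[ℤ] Chain G n}

/-- The homotopy from the identity to `φ` that fills the discrepancy over each simplex by the cone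
from its first vertex. -/
noncomputable def coneHomotopy {V : Type*} (φ : ∀ n, Chain V n →ₗ[ℤ] Chain V n) :
    ∀ n, Chain V n →ₗ[ℤ] Chain V (n + 1)
  | 0 => 0
  | n + 1 => Finsupp.lift _ ℤ _ fun σ => cone (σ 0) (n + 1)
      (single σ 1 - φ (n + 1) (single σ 1) - coneHomotopy φ n (boundary n (single σ 1)))

lemma coneHomotopy_zero {V : Type*} (φ : ∀ n, Chain V n →ₗ[ℤ] Chain V n) :
    coneHomotopy φ 0 = 0 :=
  rfl

lemma coneHomotopy_single {V : Type*} (φ : ∀ n, Chain V n →ₗ[ℤ] Chain V n) (n : ℕ)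
    (σ : Fin (n + 1) → V) :
    coneHomotopy φ (n + 1) (single σ 1) = cone (σ 0) (n + 1)
      (single σ 1 - φ (n + 1) (single σ 1) - coneHomotopy φ n (boundary n (single σ 1))) := by
  simp [coneHomotopy]

lemma raisesBy_zero_coneHomotopy {n : ℕ} (hφ : ∀ j ≤ n, RaisesBy X χ k 0 (φ j)) :
    RaisesBy X χ k 0 (coneHomotopy φ n) := by
  induction n with
  | zero => exact fun _ _ _ _ => by simp [coneHomotopy_zero]
  | succ n ih =>
    refine raisesBy_of_forall_single fun σ hσ r hr => ?_
    have hσk := single_mem_chainsAt hσ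
    have hσr : single σ 1 ∈ chainsOn (superlevel χ r) (n + 1) := single_mem_chainsOn hr
    have hφσ := hφ (n + 1) le_rfl r _ hσk hσr
    have hHσ := ih (fun j hj => hφ j (by lia)) r _ (boundary_mem_chainsAt hσk)
      (boundary_mem_chainsOn hσr)
    rw [add_zero] at hφσ hHσ ⊢
    rw [coneHomotopy_single]
    exact cone_mem_chainsOn (S := superlevel χ r) (hr 0) (sub_mem (sub_mem hσr hφσ) hHσ)

lemma IsAugChainMap.equivariantAt_coneHomotopy (hφ : IsAugChainMap X k l m φ) {n : ℕ}
    (hn : n ≤ m + 1) : EquivariantAt X k (coneHomotopy φ n) := by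
  induction n with
  | zero => exact fun _ _ _ => by simp [coneHomotopy_zero]
  | succ n ih =>
    intro g c hc
    refine map_eq_of_mem_supported (F := coneHomotopy φ (n + 1) ∘ₗ leftTranslate g _)
      (F' := leftTranslate g _ ∘ₗ coneHomotopy φ (n + 1)) (fun σ hσ => ?_) hc
    have hσk := single_mem_chainsAt hσ
    rw [LinearMap.comp_apply, LinearMap.comp_apply, leftTranslate_single, coneHomotopy_single,
      coneHomotopy_single, ← leftTranslate_single, hφ.equivariantAt (n + 1) hn g _ hσk,
      boundary_leftTranslate, ih (by lia) g _ (boundary_mem_chainsAt hσk), ← map_sub, ← map_sub]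
    exact cone_leftTranslate g (σ 0) (n + 1) _

lemma IsAugChainMap.boundary_coneHomotopy (hφ : IsAugChainMap X k l m φ) {n : ℕ} (hn : n ≤ m)
    {c : Chain G (n + 1)} (hc : c ∈ chainsAt X k (n + 1)) :
    boundary (n + 1) (coneHomotopy φ (n + 1) c) =
      c - φ (n + 1) c - coneHomotopy φ n (boundary n c) := by
  induction n with
  | zero =>
    refine map_eq_of_mem_supported (F := boundary 1 ∘ₗ coneHomotopy φ 1)
      (F' := LinearMap.id - φ 1 - coneHomotopy φ 0 ∘ₗ boundary 0) (fun σ hσ => ?_) hc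
    simp [coneHomotopy_single, coneHomotopy_zero, boundary_cone,
      hφ.boundary_comm 0 hn _ (single_mem_chainsAt hσ), hφ.degree_zero]
  | succ n ih =>
    refine map_eq_of_mem_supported (F := boundary (n + 2) ∘ₗ coneHomotopy φ (n + 2))
      (F' := LinearMap.id - φ (n + 2) - coneHomotopy φ (n + 1) ∘ₗ boundary (n + 1))
      (fun σ hσ => ?_) hc
    have hσk := single_mem_chainsAt hσ
    have discrepancy_cycle : boundary (n + 1) (single σ 1 - φ (n + 2) (single σ 1) -
        coneHomotopy φ (n + 1) (boundary (n + 1) (single σ 1))) = 0 := by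
      rw [map_sub, map_sub, hφ.boundary_comm _ hn _ hσk,
        ih (by lia) (boundary_mem_chainsAt hσk), boundary_boundary, map_zero, sub_zero, sub_self]
    simp only [LinearMap.comp_apply, LinearMap.sub_apply, LinearMap.id_apply]
    rw [coneHomotopy_single, boundary_cone, discrepancy_cycle, map_zero, sub_zero]

end ConeHomotopy

section Construction

variable {X : Finset G} {χ : G → ℝ} {m : ℕ}

/-- Simultaneous right translation of chains by `t`. -/
noncomputable def rightTranslate (t : G) (n : ℕ) : Chain G n →ₗ[ℤ] Chain G n :=
  Finsupp.lmapDomain ℤ ℤ fun σ i => σ i * t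

lemma rightTranslate_single (t : G) (n : ℕ) (σ : Fin n → G) (b : ℤ) :
    rightTranslate t n (single σ b) = single (fun i => σ i * t) b := by
  simp [rightTranslate]

lemma isAugChainMap_rightTranslate (X : Finset G) (k l : ℕ) (t : G) :
    IsAugChainMap X k l 0 (rightTranslate t) where
  degree_zero := by
    ext σ : 2
    simp [rightTranslate_single, Subsingleton.elim _ σ]
  mapsTo n hn c hc := by
    refine map_mem_of_mem_supported (fun σ _ => ?_) hc
    rw [rightTranslate_single]
    have : Subsingleton (Fin n) := Fin.subsingleton_iff_le_one.2 hn
    refine single_mem_chainsAt fun i j => ?_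
    rw [Subsingleton.elim i j, wordDist_self]
    exact l.zero_le
  equivariantAt n _ g c hc := by
    refine map_eq_of_mem_supported (F := rightTranslate t n ∘ₗ leftTranslate g n)
      (F' := leftTranslate g n ∘ₗ rightTranslate t n) (fun σ _ => ?_) hc
    simp only [LinearMap.comp_apply, leftTranslate_single, rightTranslate_single]
    congr 1
    funext i
    exact mul_assoc g (σ i) t
  boundary_comm n _ c hc := by
    refine map_eq_of_mem_supported (F := boundary n ∘ₗ rightTranslate t (n + 1))
      (F' := rightTranslate t n ∘ₗ boundary n) (fun σ _ => ?_) hc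
    simp only [LinearMap.comp_apply, rightTranslate_single, boundary_single, map_sum, map_smul]
    rfl

lemma IsCharacter.raisesBy_rightTranslate (hχ : IsCharacter χ) (X : Finset G) (k n : ℕ) (t : G) :
    RaisesBy X χ k (χ t) (rightTranslate t n) := by
  refine raisesBy_of_forall_single fun σ _ r hr => ?_
  rw [rightTranslate_single]
  refine single_mem_chainsOn fun i => ?_
  change r + χ t ≤ χ (σ i * t)
  rw [hχ]
  exact (add_le_add_iff_right _).2 (hr i)

/-- The value on a simplex `σ` is found by filling at level `χ (σ i * t)`, where the vertex `σ i`
realises the valuation of `σ`. -/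
lemma IsCharacter.exists_equivariantAt_lift (hχ : IsCharacter χ) {q k l l' : ℕ} {t : G}
    (hb : BoundsAt X (superlevel χ 0) q l l') {F : Chain G (q + 1) →ₗ[ℤ] Chain G (q + 1)}
    (hmap : ∀ c ∈ chainsAt X k (q + 1), F c ∈ chainsAt X l (q + 1)) (hequiv : EquivariantAt X k F)
    (hraise : RaisesBy X χ k (χ t) F)
    (hcycle : ∀ c ∈ chainsAt X k (q + 2), boundary q (F (boundary (q + 1) c)) = 0) :
    ∃ F' : Chain G (q + 2) →ₗ[ℤ] Chain G (q + 2), EquivariantAt X k F' ∧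
      (∀ c ∈ chainsAt X k (q + 2), F' c ∈ chainsAt X l' (q + 2)) ∧
      RaisesBy X χ k (χ t) F' ∧
      ∀ c ∈ chainsAt X k (q + 2), boundary (q + 1) (F' c) = F (boundary (q + 1) c) := by
  let P (σ : Fin (q + 2) → G) (y : Chain G (q + 2)) : Prop :=
    σ ∈ simplices X k (q + 2) ∧ y ∈ chainsAt X l' (q + 2) ∧
      (∀ r, (∀ i, r ≤ χ (σ i)) → y ∈ chainsOn (superlevel χ (r + χ t)) (q + 2)) ∧
      boundary (q + 1) y = F (boundary (q + 1) (single σ 1))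
  have exists_value (σ) (hσ : σ ∈ simplices X k (q + 2)) : ∃ y, P σ y := by
    obtain ⟨i, hi⟩ := Finite.exists_min fun i => χ (σ i)
    have hσk := single_mem_chainsAt hσ
    have hσi : single σ 1 ∈ chainsOn (superlevel χ (χ (σ i))) (q + 2) := single_mem_chainsOn hi
    obtain ⟨y, hyl, hyi, hy⟩ := boundsAt_iff.1 (hχ.boundsAt_superlevel hb (σ i * t)) _
      (hmap _ (boundary_mem_chainsAt hσk))
      (hχ (σ i) t ▸ hraise _ _ (boundary_mem_chainsAt hσk) (boundary_mem_chainsOn hσi))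
      (hcycle _ hσk)
    refine ⟨y, hσ, hyl, fun r hr => chainsOn_superlevel_anti χ ?_ _ hyi, hy⟩
    rw [hχ]
    exact (add_le_add_iff_right _).2 (hr i)
  have translate_value (g σ y) : P σ y → P (g • σ) (leftTranslate g (q + 2) y) := by
    rintro ⟨hσ, hyl, hyr, hy⟩
    refine ⟨smul_mem_simplices hσ g, leftTranslate_mem_chainsAt hyl g, fun r hr => ?_, ?_⟩
    · have hr' (i) : r - χ g ≤ χ (σ i) := by
        have : r ≤ χ g + χ (σ i) := hχ g (σ i) ▸ hr i
        linarith
      exact chainsOn_superlevel_anti χ (by linarith) _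
        (hχ.leftTranslate_mem_chainsOn (hyr _ hr') g)
    · rw [boundary_leftTranslate, hy, ← leftTranslate_single, boundary_leftTranslate,
        hequiv g _ (boundary_mem_chainsAt (single_mem_chainsAt hσ))]
  obtain ⟨F', hF', hP⟩ := exists_equivariantAt translate_value exists_value
  exact ⟨F', hF', fun c hc => map_mem_of_mem_supported (fun σ hσ => (hP σ hσ).2.1) hc,
    raisesBy_of_forall_single fun σ hσ => (hP σ hσ).2.2.1,
    fun c hc => map_eq_of_mem_supported (F := boundary (q + 1) ∘ₗ F')
      (F' := F ∘ₗ boundary (q + 1)) (fun σ hσ => (hP σ hσ).2.2.2) hc⟩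

lemma IsCharacter.exists_isAugChainMap (hχ : IsCharacter χ) {kv : ℕ → ℕ}
    (hkv : ∀ q < m, BoundsAt X (superlevel χ 0) q (kv q) (kv (q + 1))) {l : ℕ}
    (hl : ∀ q ≤ m, kv q ≤ l) (k : ℕ) (t : G) :
    ∃ φ, IsAugChainMap X k l m φ ∧ (∀ n ≤ m + 1, RaisesBy X χ k (χ t) (φ n)) ∧
      ∀ q ≤ m, ∀ c ∈ chainsAt X k (q + 1), φ (q + 1) c ∈ chainsAt X (kv q) (q + 1) := by
  induction m with
  | zero =>
    refine ⟨rightTranslate t, isAugChainMap_rightTranslate X k l t,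
      fun n _ => hχ.raisesBy_rightTranslate X k n t, fun q hq => ?_⟩
    exact (isAugChainMap_rightTranslate X k (kv q) t).mapsTo (q + 1) (by lia)
  | succ m ih =>
    obtain ⟨φ, hφ, hraise, hmapkv⟩ :=
      ih (fun q hq => hkv q (by lia)) fun q hq => hl q (by lia)
    have hcycle (c) (hc : c ∈ chainsAt X k (m + 2)) :
        boundary m (φ (m + 1) (boundary (m + 1) c)) = 0 := by
      rw [hφ.boundary_comm m le_rfl _ (boundary_mem_chainsAt hc), boundary_boundary, map_zero]
    obtain ⟨F, hequiv, hmap, hF, hcomm⟩ := hχ.exists_equivariantAt_lift (hkv m (by lia))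
      (hmapkv m le_rfl) (hφ.equivariantAt _ le_rfl) (hraise _ le_rfl) hcycle
    refine ⟨Function.update φ (m + 2) F,
      hφ.update (fun c hc => chainsAt_mono X (hl _ le_rfl) _ (hmap c hc)) hequiv hcomm,
      forall_le_succ_update (P := fun _ F => RaisesBy X χ k (χ t) F) hraise hF, fun q hq => ?_⟩
    rcases hq.lt_or_eq with hq | rfl
    · rw [Function.update_of_ne (by lia)]
      exact hmapkv q (by lia)
    · rwa [Function.update_self]

lemma exists_isAugChainMap_of_boundsAt_univ {kv : ℕ → ℕ}
    (hkv : ∀ q < m, BoundsAt X Set.univ q (kv q) (kv (q + 1))) {l : ℕ}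
    (hl : ∀ q ≤ m, kv q ≤ l) (k : ℕ) :
    ∃ φ, IsAugChainMap X k l m φ ∧
      ∀ q ≤ m, ∀ c ∈ chainsAt X k (q + 1), φ (q + 1) c ∈ chainsAt X (kv q) (q + 1) := by
  have superlevel_zero : superlevel (0 : G → ℝ) 0 = Set.univ := by simp [superlevel]
  rw [← superlevel_zero] at hkv
  obtain ⟨φ, hφ, -, hmap⟩ := IsCharacter.exists_isAugChainMap (fun _ _ => by simp) hkv hl k 1
  exact ⟨φ, hφ, hmap⟩

end Construction

section Criterion

variable {X : Finset G} {χ : G → ℝ} {k m : ℕ}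

lemma RaisesBy.vchain_sub_pos {q : ℕ} {F : Chain G (q + 1) →ₗ[ℤ] Chain G (q + 1)} {δ : ℝ}
    (hF : RaisesBy X χ k δ F) (hδ : 0 < δ) {c : Chain G (q + 1)} (hck : c ∈ chainsAt X k (q + 1))
    (hc : c ≠ 0) : 0 < vchain χ (F c) - vchain χ c := by
  obtain ⟨r, hr⟩ := exists_vchain_eq (χ := χ) hc
  have hFc : ((r + δ : ℝ) : EReal) ≤ vchain χ (F c) :=
    le_vchain_iff.2 (hF r c hck (le_vchain_iff.1 hr.ge))
  rw [EReal.sub_pos, hr]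
  exact (EReal.coe_lt_coe_iff.2 (lt_add_of_pos_right r hδ)).trans_le hFc

lemma IsAugChainMap.exists_pos_raisesBy {φ : ∀ n, Chain G n →ₗ[ℤ] Chain G n} {l : ℕ}
    (hφ : IsAugChainMap X k l m φ) (hX : Subgroup.closure (X : Set G) = ⊤) (hχ : IsCharacter χ)
    (hpos : ∀ q ≤ m, ∀ c ∈ chainsAt X k (q + 1), c ≠ 0 →
      0 < vchain χ (φ (q + 1) c) - vchain χ c) :
    ∃ ε, 0 < ε ∧ ∀ n ≤ m + 1, RaisesBy X χ k ε (φ n) := by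
  refine hφ.exists_raisesBy hX hχ fun q hq σ hσ => ?_
  have hv := hpos q hq _ (single_mem_chainsAt hσ) (single_ne_zero.2 one_ne_zero)
  rw [EReal.sub_pos] at hv
  obtain ⟨i, hi⟩ := Finite.exists_min fun i => χ (σ i)
  have hσi : (χ (σ i) : EReal) ≤ vchain χ (single σ (1 : ℤ)) :=
    le_vchain_iff.2 (single_mem_chainsOn hi)
  obtain ⟨s, hs, hsv⟩ := EReal.lt_iff_exists_real_btwn.1 (hσi.trans_lt hv)
  exact ⟨s - χ (σ i), sub_pos.2 (EReal.coe_lt_coe_iff.1 hs), i,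
    by simpa using le_vchain_iff.1 hsv.le⟩

lemma TypeFP.exists_isAugChainMap_raisesBy (hχ : IsCharacter χ) (hne : ∃ g, χ g ≠ 0)
    (hX : Subgroup.closure (X : Set G) = ⊤) {kv : ℕ → ℕ}
    (hkv : ∀ q < m, BoundsAt X Set.univ q (kv q) (kv (q + 1))) (hk : ∀ q ≤ m, kv q ≤ k)
    (hFP : TypeFP X (superlevel χ 0) m) :
    ∃ φ, IsAugChainMap X k k m φ ∧ ∃ δ, 0 < δ ∧ ∀ n ≤ m + 1, RaisesBy X χ k δ (φ n) := by
  choose! f _ hf using hFP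
  let lv : ℕ → ℕ := Nat.rec 0 f
  let l := (Finset.range (m + 1)).sup lv
  obtain ⟨α, hα, -⟩ := exists_isAugChainMap_of_boundsAt_univ hkv hk l
  obtain ⟨δ, hδ⟩ := hα.exists_bounded_loss hX hχ
  obtain ⟨t, ht⟩ := hχ.exists_le hne (1 - δ)
  obtain ⟨ψ, hψ, hraise, -⟩ := hχ.exists_isAugChainMap (kv := lv) (fun q hq => hf q hq (lv q))
    (fun q hq => Finset.le_sup (Finset.mem_range_succ_iff.2 hq)) k t
  exact ⟨_, hα.comp hψ, χ t + δ, by linarith,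
    fun n hn => (hδ n hn).comp (hraise n hn) (hψ.mapsTo n hn)⟩

/-- If `c` lies `N • ε` below the level `r` of its boundary, then `N` applications of `φ` lift it to
level `r`, and the cone homotopy corrects the boundary without losing valuation. -/
lemma IsAugChainMap.exists_filling_of_mem_sub_nsmul {φ : ∀ n, Chain G n →ₗ[ℤ] Chain G n}
    (hφ : IsAugChainMap X k k m φ) {ε : ℝ} (hε : 0 ≤ ε)
    (hraise : ∀ n ≤ m + 1, RaisesBy X χ k ε (φ n)) {q l : ℕ} (hq : q < m) (hkl : k ≤ l)
    (hl : ∀ c ∈ chainsAt X k (q + 1), coneHomotopy φ (q + 1) c ∈ chainsAt X l (q + 2))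
    (N : ℕ) {r : ℝ} {c : Chain G (q + 2)} (hck : c ∈ chainsAt X k (q + 2))
    (hcN : c ∈ chainsOn (superlevel χ (r - N • ε)) (q + 2))
    (hcr : boundary (q + 1) c ∈ chainsOn (superlevel χ r) (q + 1)) :
    ∃ c' ∈ chainsAt X l (q + 2), c' ∈ chainsOn (superlevel χ r) (q + 2) ∧
      boundary (q + 1) c' = boundary (q + 1) c := by
  induction N generalizing c with
  | zero => exact ⟨c, chainsAt_mono X hkl _ hck, by simpa using hcN, rfl⟩
  | succ N ih =>
    have hbk := boundary_mem_chainsAt hck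
    have hφr : boundary (q + 1) (φ (q + 2) c) ∈ chainsOn (superlevel χ r) (q + 1) := by
      rw [hφ.boundary_comm _ hq c hck]
      exact chainsOn_superlevel_anti χ (by linarith) _ (hraise (q + 1) (by lia) r _ hbk hcr)
    have hφN : φ (q + 2) c ∈ chainsOn (superlevel χ (r - N • ε)) (q + 2) :=
      chainsOn_superlevel_anti χ (by rw [succ_nsmul]; linarith) _
        (hraise (q + 2) (by lia) _ c hck hcN)
    obtain ⟨c', hc'l, hc'r, hc'⟩ := ih (hφ.mapsTo _ (by lia) c hck) hφN hφr
    have hHr : coneHomotopy φ (q + 1) (boundary (q + 1) c) ∈ chainsOn (superlevel χ r) (q + 2) := by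
      simpa using raisesBy_zero_coneHomotopy
        (fun j hj => (hraise j (by lia)).mono hε) r _ hbk hcr
    refine ⟨coneHomotopy φ (q + 1) (boundary (q + 1) c) + c', add_mem (hl _ hbk) hc'l,
      add_mem hHr hc'r, ?_⟩
    rw [map_add, hφ.boundary_coneHomotopy hq.le hbk, boundary_boundary, hc',
      hφ.boundary_comm _ hq c hck, map_zero, sub_zero, sub_add_cancel]

lemma IsAugChainMap.exists_filling_of_boundary_mem {φ : ∀ n, Chain G n →ₗ[ℤ] Chain G n}
    (hφ : IsAugChainMap X k k m φ) (hX : Subgroup.closure (X : Set G) = ⊤) {ε : ℝ} (hε : 0 < ε)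
    (hraise : ∀ n ≤ m + 1, RaisesBy X χ k ε (φ n)) {q : ℕ} (hq : q < m) :
    ∃ l, ∀ r, ∀ c ∈ chainsAt X k (q + 2), boundary (q + 1) c ∈ chainsOn (superlevel χ r) (q + 1) →
      ∃ c' ∈ chainsAt X l (q + 2), c' ∈ chainsOn (superlevel χ r) (q + 2) ∧
        boundary (q + 1) c' = boundary (q + 1) c := by
  obtain ⟨l, hl⟩ :=
    (hφ.equivariantAt_coneHomotopy (n := q + 1) (by lia)).exists_mapsTo_chainsAt hX
  refine ⟨max k l, fun r c hck hcr => ?_⟩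
  obtain ⟨s, hs⟩ := exists_mem_chainsOn_superlevel χ c
  obtain ⟨N, hN⟩ := Archimedean.arch (r - s) hε
  exact hφ.exists_filling_of_mem_sub_nsmul hε.le hraise hq (le_max_left k l)
    (fun c hc => chainsAt_mono X (le_max_right k l) _ (hl c hc)) N hck
    (chainsOn_superlevel_anti χ (by linarith) _ hs) hcr

lemma IsAugChainMap.exists_raisesBy_nsmul {φ : ∀ n, Chain G n →ₗ[ℤ] Chain G n}
    (hφ : IsAugChainMap X k k m φ) {ε : ℝ} (hraise : ∀ n ≤ m + 1, RaisesBy X χ k ε (φ n)) (N : ℕ) :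
    ∃ ψ, IsAugChainMap X k k m ψ ∧ ∀ n ≤ m + 1, RaisesBy X χ k (N • ε) (ψ n) := by
  induction N with
  | zero => exact ⟨fun _ => LinearMap.id, ⟨rfl, fun _ _ _ hc => hc, fun _ _ _ _ _ => rfl,
      fun _ _ _ _ => rfl⟩, fun _ _ _ _ _ hc => by simpa using hc⟩
  | succ N ih =>
    obtain ⟨ψ, hψ, hN⟩ := ih
    refine ⟨_, hφ.comp hψ, fun n hn => ?_⟩
    rw [succ_nsmul]
    exact (hraise n hn).comp (hN n hn) (hψ.mapsTo n hn)

lemma IsAugChainMap.typeFP_superlevel {φ : ∀ n, Chain G n →ₗ[ℤ] Chain G n}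
    (hφ : IsAugChainMap X k k m φ) (hX : Subgroup.closure (X : Set G) = ⊤) (hχ : IsCharacter χ)
    {ε : ℝ} (hε : 0 < ε) (hraise : ∀ n ≤ m + 1, RaisesBy X χ k ε (φ n)) {kv : ℕ → ℕ}
    (hkv : ∀ q < m, BoundsAt X Set.univ q (kv q) (kv (q + 1))) (hk : ∀ q ≤ m, kv q ≤ k) :
    TypeFP X (superlevel χ 0) m := by
  intro q hq K
  obtain ⟨α, hα, hαkv⟩ := exists_isAugChainMap_of_boundsAt_univ hkv hk K
  obtain ⟨δ, hloss⟩ := hα.exists_bounded_loss hX hχ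
  obtain ⟨N, hN⟩ := Archimedean.arch (-δ) hε
  obtain ⟨β, hβ, hβraise⟩ := hφ.exists_raisesBy_nsmul hraise N
  let ψ (n : ℕ) : Chain G n →ₗ[ℤ] Chain G n := β n ∘ₗ α n
  have hψ : IsAugChainMap X K k m ψ := hβ.comp hα
  have hψraise (n) (hn : n ≤ m + 1) : RaisesBy X χ K 0 (ψ n) :=
    ((hβraise n hn).comp (hloss n hn) (hα.mapsTo n hn)).mono (by linarith)
  obtain ⟨l₁, hl₁⟩ := hφ.exists_filling_of_boundary_mem hX hε hraise hq
  obtain ⟨l₂, hl₂⟩ :=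
    (hψ.equivariantAt_coneHomotopy (n := q + 1) (by lia)).exists_mapsTo_chainsAt hX
  refine ⟨max K (max l₁ l₂), le_max_left _ _, boundsAt_iff.2 fun z hzK hz0 hz => ?_⟩
  obtain ⟨c, hck, -, hc⟩ := boundsAt_iff.1 (hkv q hq) (α (q + 1) z) (hαkv q hq.le z hzK)
    (fun _ _ _ => Set.mem_univ _) (by rw [hα.boundary_comm q hq.le z hzK, hz, map_zero])
  replace hck := chainsAt_mono X (hk _ hq) _ hck
  have hβc : boundary (q + 1) (β (q + 2) c) = ψ (q + 1) z := by
    rw [hβ.boundary_comm _ hq c hck, hc, LinearMap.comp_apply]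
  obtain ⟨c', hc'l, hc'0, hc'⟩ := hl₁ 0 (β (q + 2) c) (hβ.mapsTo _ (by lia) c hck)
    (by simpa [hβc] using hψraise (q + 1) (by lia) 0 z hzK hz0)
  refine ⟨coneHomotopy ψ (q + 1) z + c', add_mem ?_ ?_, add_mem ?_ hc'0, ?_⟩
  · exact chainsAt_mono X (by simp) _ (hl₂ z hzK)
  · exact chainsAt_mono X (by simp) _ hc'l
  · simpa using raisesBy_zero_coneHomotopy (fun j hj => hψraise j (by lia)) 0 z hzK hz0
  · rw [map_add, hψ.boundary_coneHomotopy hq.le hzK, hz, map_zero, sub_zero, hc', hβc,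
      sub_add_cancel]

end Criterion

/-- Given a homological connecting vector `(k₀,…,k_m)` for `G` with maximum `k`, a nonzero
character `χ` lies in `Σ^m(G;ℤ)` iff there is a valuation-raising chain endomorphism of
`ℤG`-complexes on `(C_q^k(G))_{q≤m}` extending the identity on `ℤ`. -/
theorem stmt12 {G : Type*} [Group G] (X : Finset G)
    (hX : Subgroup.closure (X : Set G) = ⊤) (m : ℕ) (kv : ℕ → ℕ)
    (hconn : ∀ q < m, BoundsAt X Set.univ q (kv q) (kv (q + 1)))
    (χ : G → ℝ) (hχ : IsCharacter χ) (hne : ∃ g, χ g ≠ 0) :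
    TypeFP X {g : G | 0 ≤ χ g} m ↔
      ∃ φ : ∀ q : ℕ, ((Fin (q + 1) → G) →₀ ℤ) →ₗ[ℤ] ((Fin (q + 1) → G) →₀ ℤ),
        IsChainEndo X ((Finset.range (m + 1)).sup kv) m φ ∧
        ∀ q ≤ m, ∀ c : (Fin (q + 1) → G) →₀ ℤ,
          VRChain X Set.univ q ((Finset.range (m + 1)).sup kv) c → c ≠ 0 →
            0 < vchain χ (φ q c) - vchain χ c := by
  have hk (q) (hq : q ≤ m) : kv q ≤ (Finset.range (m + 1)).sup kv :=
    Finset.le_sup (Finset.mem_range_succ_iff.2 hq)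
  simp only [vrChain_univ_iff]
  constructor
  · intro hFP
    obtain ⟨φ, hφ, δ, hδ, hraise⟩ :=
      TypeFP.exists_isAugChainMap_raisesBy hχ hne hX hconn hk hFP
    exact ⟨_, hφ.isChainEndo, fun q hq c hck hc =>
      (hraise (q + 1) (by lia)).vchain_sub_pos hδ hck hc⟩
  · rintro ⟨φ, hφ, hpos⟩
    have hφ' := hφ.isAugChainMap_augment
    obtain ⟨ε, hε, hraise⟩ := hφ'.exists_pos_raisesBy hX hχ hpos
    exact hφ'.typeFP_superlevel hX hχ hε hraise hconn hk
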